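/- arXiv:0910.3973 — 2 statements merged into one kernel-verified Lean document; each statement's English description precedes it below -/
import Mathlib

section
/- For every real λ ≥ 1, every real N₀ > 0, and every real q with 0 < q ≤ 1, q·min(1, 1/(λq))·log(1 + (log(1/q) + 1)/N₀) ≤ (1/λ)·log(1 + (log λ + 1)/N₀). -/
/-!
Put `p = 1 / λ ≤ 1` and `r q = log (1 + (log (1 / q) + 1) / N₀)`. The left-hand side is
`min q p * r q`. The rate `r` decreases in `q`, which settles `p ≤ q`; for `q ≤ p` it suffices
that `q * r q` increases on `(0, 1]`. In the variable `x = N₀ + 1 + log (1 / q)` the latter says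
that `exp (-x) * log (x / N₀)` decreases on `[N₀ + 1, ∞)`, i.e. that the logarithmic derivative
of `log (x / N₀)` is at most `1` there, and this follows from `log (x / N₀) ≥ 1 - N₀ / x`.
-/

open Real Set

theorem inv_le_log_div {N x : ℝ} (hN : 0 < N) (hx : N + 1 ≤ x) : x⁻¹ ≤ log (x / N) := by
  have hx0 : 0 < x := by linarith
  calc x⁻¹ ≤ 1 - (x / N)⁻¹ := by
        rw [inv_div, ← one_div, one_sub_div hx0.ne']
        gcongr
        linarith
    _ ≤ log (x / N) := one_sub_inv_le_log_of_pos (by positivity)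

theorem antitoneOn_exp_neg_mul_log_div {N : ℝ} (hN : 0 < N) :
    AntitoneOn (fun x ↦ exp (-x) * log (x / N)) (Ici (N + 1)) := by
  intro x (hx : N + 1 ≤ x) y _ hxy
  have hx0 : 0 < x := by linarith
  have hy0 : 0 < y := by linarith
  have hinv : x⁻¹ ≤ log (x / N) := inv_le_log_div hN hx
  have hlog : 0 ≤ log (x / N) := (inv_pos.2 hx0).le.trans hinv
  have hgrowth : log (y / N) ≤ exp (y - x) * log (x / N) :=
    calc log (y / N) = log (y / x) + log (x / N) := by
          rw [← log_mul (by positivity) (by positivity), div_mul_div_cancel₀ hx0.ne']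
      _ ≤ (y / x - 1) + log (x / N) := by
          gcongr
          exact log_le_sub_one_of_pos (by positivity)
      _ = (y - x) * x⁻¹ + log (x / N) := by rw [div_sub_one hx0.ne', div_eq_mul_inv]
      _ ≤ (y - x) * log (x / N) + log (x / N) := by
          have := sub_nonneg.2 hxy
          gcongr
      _ = (y - x + 1) * log (x / N) := by ring
      _ ≤ exp (y - x) * log (x / N) := by
          gcongr
          exact add_one_le_exp _
  calc exp (-y) * log (y / N) ≤ exp (-y) * (exp (y - x) * log (x / N)) := by gcongr
    _ = exp (-x) * log (x / N) := by
        rw [← mul_assoc, ← exp_add]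
        ring_nf

/-- The bound on the transmission rate of an active link, at noise level `N`, under the on-off
policy with activity probability `q`. The threshold `τ = log (1 / q)` is expressed through `q`. -/
noncomputable def onOffRate (N q : ℝ) : ℝ :=
  log (1 + (log (1 / q) + 1) / N)

theorem onOffRate_eq_log_div {N : ℝ} (hN : N ≠ 0) (q : ℝ) :
    onOffRate N q = log ((N + 1 - log q) / N) := by
  rw [onOffRate, one_div, log_inv, one_add_div hN]
  ring_nf

theorem antitoneOn_onOffRate {N : ℝ} (hN : 0 < N) :
    AntitoneOn (onOffRate N) (Ioo 0 (exp (N + 1))) := by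
  intro p hp q hq hpq
  have hlog : log q < N + 1 := (log_lt_iff_lt_exp hq.1).2 hq.2
  rw [onOffRate_eq_log_div hN.ne', onOffRate_eq_log_div hN.ne']
  apply log_le_log (div_pos (sub_pos.2 hlog) hN)
  have := log_le_log hp.1 hpq
  gcongr

theorem monotoneOn_mul_onOffRate {N : ℝ} (hN : 0 < N) :
    MonotoneOn (fun q ↦ q * onOffRate N q) (Ioc 0 1) := by
  have hsubst : EqOn (fun q ↦ exp (N + 1) *
      (exp (-(N + 1 - log q)) * log ((N + 1 - log q) / N)))
      (fun q ↦ q * onOffRate N q) (Ioc 0 1) := by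
    intro q hq
    simp only [onOffRate_eq_log_div hN.ne']
    rw [← mul_assoc, ← exp_add, neg_sub, add_sub_cancel, exp_log hq.1]
  refine MonotoneOn.congr (fun p hp q hq hpq ↦ ?_) hsubst
  have hmem : ∀ {s : ℝ}, s ∈ Ioc 0 1 → N + 1 - log s ∈ Ici (N + 1) := fun hs ↦
    (le_sub_self_iff _).2 (log_nonpos hs.1.le hs.2)
  refine mul_le_mul_of_nonneg_left ?_ (exp_pos _).le
  exact antitoneOn_exp_neg_mul_log_div hN (hmem hq) (hmem hp)
    (sub_le_sub_left (log_le_log hp.1 hpq) _)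

theorem min_mul_onOffRate_le {N p q : ℝ} (hN : 0 < N) (hp : p ∈ Ioc 0 1)
    (hq : q ∈ Ioo 0 (exp (N + 1))) : min q p * onOffRate N q ≤ p * onOffRate N p := by
  rcases le_total q p with hqp | hpq
  · rw [min_eq_left hqp]
    exact monotoneOn_mul_onOffRate hN ⟨hq.1, hqp.trans hp.2⟩ hp hqp
  · rw [min_eq_right hpq]
    exact mul_le_mul_of_nonneg_left
      (antitoneOn_onOffRate hN ⟨hp.1, hpq.trans_lt hq.2⟩ hq hpq) hp.1.le

theorem throughput_bound_optimization_general {lam N₀ q : ℝ}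
    (hlam : 1 ≤ lam) (hN₀ : 0 < N₀) (hq0 : 0 < q) (hq : q < exp (N₀ + 1)) :
    q * min 1 (1 / (lam * q)) * log (1 + (log (1 / q) + 1) / N₀)
      ≤ (1 / lam) * log (1 + (log lam + 1) / N₀) := by
  have hlam0 : 0 < lam := by linarith
  have hp : 1 / lam ∈ Ioc 0 1 := ⟨one_div_pos.2 hlam0, (div_le_one hlam0).2 hlam⟩
  have hload : q * min 1 (1 / (lam * q)) = min q (1 / lam) := by
    rw [mul_min_of_nonneg _ _ hq0.le, mul_one]
    field_simp
  rw [hload]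
  simpa only [onOffRate, one_div_one_div] using min_mul_onOffRate_le hN₀ hp ⟨hq0, hq⟩

/-- Optimization step in Lemma 4: for `λ ≥ 1`, `N₀ > 0`, `0 < q ≤ 1`,
`q·min(1, 1/(λq))·log(1 + (log(1/q) + 1)/N₀) ≤ (1/λ)·log(1 + (log λ + 1)/N₀)`. -/
theorem throughput_bound_optimization (lam N₀ q : ℝ)
    (hlam : 1 ≤ lam) (hN₀ : 0 < N₀) (hq0 : 0 < q) (hq1 : q ≤ 1) :
    q * min 1 (1 / (lam * q)) * Real.log (1 + (Real.log (1 / q) + 1) / N₀)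
      ≤ (1 / lam) * Real.log (1 + (Real.log lam + 1) / N₀) :=
  throughput_bound_optimization_general hlam hN₀ hq0
    (hq1.trans_lt (one_lt_exp_iff.2 (by positivity)))
end

section
/- Fix reals α̂ > 0 and δ > 0. For each integer n large enough that q_n := δ·(log n)²/n ∈ (0,1), set τ_n := log(1/q_n), let λ_n ≥ 1 be reals with λ_n·(log n)/n → 0 as n → ∞, and define Δ_n := 1/(1 + λ_n·log((1−q_n)^{−1})) and T_n := n·q_n·Δ_n·log(1 + τ_n/(n·α̂·q_n·Δ_n)). Then T_n·α̂/log n → 1 as n → ∞; that is, T_n is asymptotically equivalent to (log n)/α̂. -/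
open Filter Real

open Asymptotics Topology

/-!
Put `x_n = n·q_n·Δ_n`, so that `T_n·ahat = (x_n·ahat)·log (1 + τ_n/(x_n·ahat))`. Since
`log (1 + u) ~ u` at `0`, this is equivalent to `τ_n` as soon as `τ_n = o(x_n)`. With `τ_n ~ log n`
and `1/Δ_n = 1 + O(λ_n·q_n)`, the latter amounts to `log n + λ_n·q_n·log n = o(n·q_n)`: the first
summand is controlled by the choice of `q_n`, and the second is `o(n·q_n)` because
`λ_n·log n = o(n)`.
-/

/-- The probability `Δ` that a buffer is full, for Poisson arrivals with mean interarrival time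
`lam` on a link that is active with probability `q`. -/
noncomputable def fullBufferProb (lam q : ℝ) : ℝ :=
  1 / (1 + lam * log (1 - q)⁻¹)

/-- The effective throughput `T` of `n` links under the on-off scheme with activity probability `q`
and full-buffer probability `Δ`. The activation threshold is `τ = log (1 / q)`; `ahat` is the
mean shadowing gain weighted by the shadowing probability. -/
noncomputable def effectiveThroughput (n ahat q Δ : ℝ) : ℝ :=
  n * q * Δ * log (1 + log (1 / q) / (n * ahat * q * Δ))

theorem isEquivalent_log_one_add : (fun x : ℝ => log (1 + x)) ~[𝓝 0] fun x => x := by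
  have h : HasDerivAt (fun x : ℝ => log (1 + x)) 1 0 := by
    simpa using ((hasDerivAt_id (0 : ℝ)).const_add 1).log (by simp)
  simpa [IsEquivalent, Pi.sub_def] using h.isLittleO

theorem isEquivalent_log_one_sub_inv : (fun x : ℝ => log (1 - x)⁻¹) ~[𝓝 0] fun x => x := by
  have h : Tendsto (fun x : ℝ => -x) (𝓝 0) (𝓝 0) := by
    simpa using (tendsto_id (x := 𝓝 (0 : ℝ))).neg
  simpa [Function.comp_def, log_inv, sub_eq_add_neg]
    using (isEquivalent_log_one_add.comp_tendsto h).neg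

theorem fullBufferProb_pos {lam q : ℝ} (hlam : 0 ≤ lam) (hq₀ : 0 ≤ q) (hq₁ : q < 1) :
    0 < fullBufferProb lam q := by
  have : 0 ≤ log (1 - q)⁻¹ := log_nonneg ((one_le_inv₀ (by linarith)).2 (by linarith))
  unfold fullBufferProb
  positivity

section

variable {ι : Type*} {l : Filter ι}

theorem isEquivalent_mul_log_one_add_div {c x : ι → ℝ} (h : c =o[l] x) :
    (fun i => x i * log (1 + c i / x i)) ~[l] c := by
  have hlog : (fun i => log (1 + c i / x i)) ~[l] fun i => c i / x i :=
    isEquivalent_log_one_add.comp_tendsto h.tendsto_div_nhds_zero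
  have hcancel : (fun i => x i * (c i / x i)) =ᶠ[l] c := by
    filter_upwards [h.isBigO.eq_zero_imp] with i hi using mul_div_cancel_of_imp' hi
  exact (IsEquivalent.refl.mul hlog).trans_eventuallyEq hcancel

theorem isEquivalent_effectiveThroughput_mul {ahat : ℝ} (hahat : ahat ≠ 0) {n q Δ : ι → ℝ}
    (h : (fun i => log (1 / q i)) =o[l] fun i => n i * q i * Δ i) :
    (fun i => effectiveThroughput (n i) ahat (q i) (Δ i) * ahat) ~[l] fun i => log (1 / q i) := by
  have h' := isEquivalent_mul_log_one_add_div (h.trans_isBigO (isBigO_self_const_mul hahat _ l))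
  refine h'.congr_left (.of_forall fun i => ?_)
  simp only [effectiveThroughput]
  ring_nf

theorem isLittleO_mul_fullBufferProb {f n lam q : ι → ℝ} (hlam : ∀ᶠ i in l, 0 ≤ lam i)
    (hq : Tendsto q l (𝓝[>] 0)) (hf : f =o[l] fun i => n i * q i)
    (hlamf : (fun i => lam i * f i) =o[l] n) :
    f =o[l] fun i => n i * q i * fullBufferProb (lam i) (q i) := by
  obtain ⟨hq₀, hqpos⟩ := tendsto_nhdsWithin_iff.1 hq
  have hlog : (fun i => log (1 - q i)⁻¹) =O[l] q :=
    (isEquivalent_log_one_sub_inv.comp_tendsto hq₀).isBigO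
  have hsum : (fun i => f i + lam i * f i * log (1 - q i)⁻¹) =o[l] fun i => n i * q i :=
    hf.add (hlamf.mul_isBigO hlog)
  refine (hsum.mul_isBigO (isBigO_refl (fun i => fullBufferProb (lam i) (q i)) l)).congr' ?_ .rfl
  filter_upwards [hlam, hqpos, hq₀.eventually_lt_const one_pos] with i hlami hqi hqi₁
  have hΔ : (1 + lam i * log (1 - q i)⁻¹) * fullBufferProb (lam i) (q i) = 1 :=
    mul_one_div_cancel (one_div_pos.1 (fullBufferProb_pos hlami (le_of_lt hqi) hqi₁)).ne'
  linear_combination f i * hΔ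

end

theorem tendsto_mul_log_pow_div_self {δ : ℝ} (hδ : 0 < δ) (k : ℕ) :
    Tendsto (fun x => δ * log x ^ k / x) atTop (𝓝[>] 0) := by
  refine tendsto_nhdsWithin_iff.2 ⟨?_, ?_⟩
  · exact (isLittleO_pow_log_id_atTop.const_mul_left δ).tendsto_div_nhds_zero
  · filter_upwards [eventually_gt_atTop 1] with x hx
    have := log_pos hx
    exact Set.mem_Ioi.2 (by positivity)

theorem isEquivalent_log_one_div_mul_log_pow_div_self {δ : ℝ} (hδ : δ ≠ 0) (k : ℕ) :
    (fun x => log (1 / (δ * log x ^ k / x))) ~[atTop] log := by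
  have hloglog : (fun x => log (log x)) =o[atTop] log :=
    isLittleO_log_id_atTop.comp_tendsto tendsto_log_atTop
  have hsmall : (fun x => log δ + k * log (log x)) =o[atTop] log :=
    isLittleO_const_log_atTop.add (hloglog.const_mul_left k)
  refine (IsEquivalent.refl.sub_isLittleO hsmall).congr_left ?_
  filter_upwards [eventually_gt_atTop 1] with x hx
  have hlogx : log x ^ k ≠ 0 := pow_ne_zero k (log_pos hx).ne'
  rw [one_div_div, log_div (by positivity) (mul_ne_zero hδ hlogx), log_mul hδ hlogx, log_pow,
    Pi.sub_apply]

theorem isLittleO_log_self_mul_mul_log_pow_div_self {δ : ℝ} (hδ : δ ≠ 0) {k : ℕ} (hk : 1 < k) :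
    log =o[atTop] fun x => x * (δ * log x ^ k / x) := by
  have hpow : log =o[atTop] fun x => log x ^ k := by
    simpa [Function.comp_def] using
      (isLittleO_pow_pow_atTop_of_lt (𝕜 := ℝ) hk).comp_tendsto tendsto_log_atTop
  refine ((isLittleO_const_mul_right_iff hδ).2 hpow).congr' .rfl ?_
  filter_upwards [eventually_ne_atTop 0] with x hx using (mul_div_cancel₀ _ hx).symm

theorem effective_throughput_PAP_general {ahat : ℝ} (hahat : ahat ≠ 0) {q lam : ℕ → ℝ}
    (hlam : ∀ᶠ n in atTop, 0 ≤ lam n) (hq : Tendsto q atTop (𝓝[>] 0))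
    (hτ : (fun n => log (1 / q n)) ~[atTop] fun n => log n)
    (hnq : (fun n : ℕ => log n) =o[atTop] fun n => n * q n)
    (hlamn : Tendsto (fun n => lam n * log n / n) atTop (𝓝 0)) :
    Tendsto (fun n : ℕ => effectiveThroughput n ahat (q n) (fullBufferProb (lam n) (q n)) * ahat /
      log n) atTop (𝓝 1) := by
  have hn₀ : ∀ᶠ n : ℕ in atTop, (n : ℝ) ≠ 0 := tendsto_natCast_atTop_atTop.eventually_ne_atTop 0
  have hlog₀ : ∀ᶠ n : ℕ in atTop, log n ≠ 0 :=
    (tendsto_log_atTop.comp tendsto_natCast_atTop_atTop).eventually_ne_atTop 0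
  have hlamlog : (fun n => lam n * log n) =o[atTop] fun n => (n : ℝ) :=
    (isLittleO_iff_tendsto' (hn₀.mono fun _ hn h => absurd h hn)).2 hlamn
  have hlogΔ := isLittleO_mul_fullBufferProb hlam hq hnq hlamlog
  have hT := (isEquivalent_effectiveThroughput_mul hahat (hτ.trans_isLittleO hlogΔ)).trans hτ
  exact (isEquivalent_iff_tendsto_one hlog₀).1 hT

/-- Theorem 1 (Poisson arrival process): with `q_n = δ·(log n)²/n`, `τ_n = log(1/q_n)`,
delay bounds `λ_n ≥ 1` with `λ_n·(log n)/n → 0`, and full-buffer probability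
`Δ_n = 1/(1 + λ_n·log((1−q_n)⁻¹))`, the effective throughput
`T_n = n·q_n·Δ_n·log(1 + τ_n/(n·ahat·q_n·Δ_n))` satisfies `T_n·ahat/log n → 1`. -/
theorem effective_throughput_PAP (ahat δ : ℝ) (hahat : 0 < ahat) (hδ : 0 < δ)
    (lam : ℕ → ℝ) (hlam1 : ∀ n, 1 ≤ lam n)
    (hlam : Tendsto (fun n : ℕ => lam n * Real.log n / n) atTop (nhds 0)) :
    Tendsto (fun n : ℕ =>
      let q := δ * (Real.log n) ^ 2 / n
      let τ := Real.log (1 / q)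
      let Δ := 1 / (1 + lam n * Real.log (1 - q)⁻¹)
      (n * q * Δ * Real.log (1 + τ / (n * ahat * q * Δ))) * ahat / Real.log n)
      atTop (nhds 1) := by
  have hn : Tendsto (Nat.cast : ℕ → ℝ) atTop atTop := tendsto_natCast_atTop_atTop
  exact effective_throughput_PAP_general hahat.ne' (.of_forall fun n => zero_le_one.trans (hlam1 n))
    ((tendsto_mul_log_pow_div_self hδ 2).comp hn)
    ((isEquivalent_log_one_div_mul_log_pow_div_self hδ.ne' 2).comp_tendsto hn)
    ((isLittleO_log_self_mul_mul_log_pow_div_self hδ.ne' one_lt_two).comp_tendsto hn) hlam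
end
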